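/- Let d ≥ 2. There exists a constant C ≥ 1 depending only on d such that for every v ∈ ℝ^d \ {0}: (1/C) ⟨v⟩^{−3} ≤ ∫_{ℝ^d} (1/|v_*|)·(1 − ((v·v_*)/(|v||v_*|))²) μ(v − v_*) dv_* ≤ C ⟨v⟩^{−3}. -/

import Mathlib

/-!
Write `u = w - v` and `sin² = 1 - (v·w / (|v||w|))²`, the squared sine of the angle between `v` and
`w`.

*Upper bound.* The distance from `w` to the line `ℝ v` is at most `|u|`, so
`sin² ≤ min (1, |u|² / |w|²)`. Combined with Peetre's inequality `⟨v⟩² ≤ 2 ⟨w⟩² ⟨u⟩²` (the cases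
`|w| ≥ 1` and `|w| < 1` being treated separately), this dominates `⟨v⟩³` times the integrand
pointwise by a multiple of `e^{-|u|²/2} + |w|⁻¹ 1_{|w| < 1}` (`integrand_le`). The integral of this
function does not depend on `v`, and it is finite because `d ≥ 2`.

*Lower bound.* Choose a unit vector `e ⊥ v`, which exists because `d ≥ 2`. On the ball of centre
`v + e` and radius `1/2` one has `e·w ≥ 1/2`, hence `sin² ≥ (e·w)² / |w|² ≥ 1 / (4|w|²)`, while
`|w| ≤ (5/2)⟨v⟩` and `|u| ≤ 3/2`. So the integrand is at least a constant times `⟨v⟩⁻³` there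
(`le_integrand`), and the volume of that ball does not depend on `v`.
-/


open MeasureTheory
open scoped InnerProductSpace

/-- The normalized Maxwellian `μ(v) = π^{-d/2} e^{-|v|²}` on `ℝ^d`. -/
noncomputable def maxw (d : ℕ) (v : EuclideanSpace ℝ (Fin d)) : ℝ :=
  Real.pi ^ (-(d : ℝ) / 2) * Real.exp (-‖v‖ ^ 2)

/-- The Japanese bracket `⟨v⟩ = (1 + |v|²)^{1/2}`. -/
noncomputable def jap {d : ℕ} (v : EuclideanSpace ℝ (Fin d)) : ℝ :=
  Real.sqrt (1 + ‖v‖ ^ 2)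

section InnerProduct

variable {E : Type*} [NormedAddCommGroup E] [InnerProductSpace ℝ E]

lemma sinSq_nonneg (v w : E) : 0 ≤ 1 - (⟪v, w⟫_ℝ / (‖v‖ * ‖w‖)) ^ 2 := by
  have h := abs_real_inner_div_norm_mul_norm_le_one v w
  have := (sq_le_one_iff_abs_le_one _).2 h
  linarith

lemma sinSq_le_one (v w : E) : 1 - (⟪v, w⟫_ℝ / (‖v‖ * ‖w‖)) ^ 2 ≤ 1 := by
  have := sq_nonneg (⟪v, w⟫_ℝ / (‖v‖ * ‖w‖))
  linarith

/-- The distance from `w` to the line spanned by `v` is at most `‖v - w‖`. -/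
lemma sinSq_mul_le {v w : E} (hv : v ≠ 0) (hw : w ≠ 0) :
    (1 - (⟪v, w⟫_ℝ / (‖v‖ * ‖w‖)) ^ 2) * ‖w‖ ^ 2 ≤ ‖v - w‖ ^ 2 := by
  have hv' : 0 < ‖v‖ := norm_pos_iff.2 hv
  have hw' : 0 < ‖w‖ := norm_pos_iff.2 hw
  have h1 : (1 - (⟪v, w⟫_ℝ / (‖v‖ * ‖w‖)) ^ 2) * ‖w‖ ^ 2 = ‖w‖ ^ 2 - (⟪v, w⟫_ℝ / ‖v‖) ^ 2 := by
    field_simp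
  have h2 : ⟪v, w⟫_ℝ = ⟪v, w⟫_ℝ / ‖v‖ * ‖v‖ := by field_simp
  rw [h1, norm_sub_sq_real]
  nlinarith [sq_nonneg (‖v‖ - ⟪v, w⟫_ℝ / ‖v‖)]

/-- Bessel's inequality for the orthonormal pair `v / ‖v‖`, `e`. -/
lemma le_sinSq_mul {v w e : E} (hv : v ≠ 0) (hw : w ≠ 0) (he : ‖e‖ = 1) (hve : ⟪v, e⟫_ℝ = 0) :
    ⟪e, w⟫_ℝ ^ 2 ≤ (1 - (⟪v, w⟫_ℝ / (‖v‖ * ‖w‖)) ^ 2) * ‖w‖ ^ 2 := by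
  have hv' : 0 < ‖v‖ := norm_pos_iff.2 hv
  have hw' : 0 < ‖w‖ := norm_pos_iff.2 hw
  have h1 : (1 - (⟪v, w⟫_ℝ / (‖v‖ * ‖w‖)) ^ 2) * ‖w‖ ^ 2 = ‖w‖ ^ 2 - ⟪v, w⟫_ℝ ^ 2 / ‖v‖ ^ 2 := by
    field_simp
  have h2 : ⟪v, w - ⟪e, w⟫_ℝ • e⟫_ℝ = ⟪v, w⟫_ℝ := by
    rw [inner_sub_right, inner_smul_right, hve]; ring
  have h3 : ‖w - ⟪e, w⟫_ℝ • e‖ ^ 2 = ‖w‖ ^ 2 - ⟪e, w⟫_ℝ ^ 2 := by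
    rw [norm_sub_sq_real, inner_smul_right, norm_smul, he, real_inner_comm w e, mul_pow,
      Real.norm_eq_abs, sq_abs]
    ring
  have h4 : ⟪v, w⟫_ℝ ^ 2 ≤ ‖v‖ ^ 2 * ‖w - ⟪e, w⟫_ℝ • e‖ ^ 2 := by
    rw [← h2, ← mul_pow, ← sq_abs]
    exact pow_le_pow_left₀ (abs_nonneg _) (abs_real_inner_le_norm _ _) 2
  have h5 : ⟪v, w⟫_ℝ ^ 2 / ‖v‖ ^ 2 ≤ ‖w‖ ^ 2 - ⟪e, w⟫_ℝ ^ 2 := by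
    rw [div_le_iff₀ (by positivity), ← h3]; linarith
  rw [h1]; linarith

end InnerProduct

lemma exists_unit_orthogonal {d : ℕ} (hd : 2 ≤ d) {v : EuclideanSpace ℝ (Fin d)} (hv : v ≠ 0) :
    ∃ e : EuclideanSpace ℝ (Fin d), ‖e‖ = 1 ∧ ⟪v, e⟫_ℝ = 0 := by
  have h := Submodule.finrank_add_finrank_orthogonal (Submodule.span ℝ {v})
  rw [finrank_span_singleton hv, finrank_euclideanSpace_fin] at h
  have hne : (Submodule.span ℝ {v})ᗮ ≠ ⊥ := by
    intro h0
    rw [h0, finrank_bot] at h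
    omega
  obtain ⟨x, hx, hx0⟩ := Submodule.exists_mem_ne_zero_of_ne_bot hne
  have hx1 := Submodule.mem_orthogonal_singleton_iff_inner_right.1 hx
  refine ⟨‖x‖⁻¹ • x, norm_smul_inv_norm hx0, ?_⟩
  rw [inner_smul_right, hx1, mul_zero]

lemma one_add_cube_mul_exp_le (x : ℝ) (hx : 0 ≤ x) :
    (1 + x) ^ 3 * Real.exp (-x) ≤ 216 * Real.exp (-(x / 2)) := by
  have h1 : 1 + x ≤ 6 * Real.exp (x / 6) := by
    have := Real.add_one_le_exp (x / 6); linarith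
  have h2 : (1 + x) ^ 3 ≤ (6 * Real.exp (x / 6)) ^ 3 := pow_le_pow_left₀ (by linarith) h1 3
  calc (1 + x) ^ 3 * Real.exp (-x) ≤ (6 * Real.exp (x / 6)) ^ 3 * Real.exp (-x) := by gcongr
    _ = 216 * Real.exp (-(x / 2)) := by
      rw [mul_pow, ← Real.exp_nat_mul, mul_assoc, ← Real.exp_add]
      norm_num
      ring

/-- The scalar form of the domination: `a = ⟨v⟩`, `t = |w|`, `s = |v - w|` and `S` is the squared
sine of the angle between `v` and `w`. -/
lemma scalar_bound {a t s S : ℝ} (ha : 0 ≤ a) (ht : 0 < t) (hS0 : 0 ≤ S) (hS1 : S ≤ 1)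
    (hS : S * t ^ 2 ≤ s ^ 2) (hP : a ^ 2 ≤ 2 * (1 + t ^ 2) * (1 + s ^ 2)) :
    a ^ 3 * (t⁻¹ * S * Real.exp (-s ^ 2)) ≤
      1728 * (Real.exp (-(s ^ 2 / 2)) + if t < 1 then t⁻¹ else 0) := by
  have key := one_add_cube_mul_exp_le (s ^ 2) (sq_nonneg s)
  have hs := sq_nonneg s
  have hq : 1 ≤ 1 + s ^ 2 := by linarith
  have hr : Real.sqrt (1 + s ^ 2) ^ 2 = 1 + s ^ 2 := Real.sq_sqrt (by linarith)
  set r := Real.sqrt (1 + s ^ 2) with hr_def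
  have hr0 : 0 ≤ r := Real.sqrt_nonneg _
  have hr1 : 1 ≤ r := by nlinarith
  have hr3 : r ^ 3 ≤ (1 + s ^ 2) ^ 2 := by
    rw [← hr, ← pow_mul]; exact pow_le_pow_right₀ hr1 (by norm_num)
  split_ifs with h
  · have h1 : a ≤ 2 * r := by
      refine (pow_le_pow_iff_left₀ ha (by positivity) two_ne_zero).1 ?_
      rw [mul_pow, hr]
      refine hP.trans ?_
      have : t ^ 2 ≤ 1 := by nlinarith
      gcongr
      linarith
    have h2 : a ^ 3 ≤ 8 * (1 + s ^ 2) ^ 3 := by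
      have := pow_le_pow_left₀ ha h1 3
      have h3 : (1 + s ^ 2) ^ 2 ≤ (1 + s ^ 2) ^ 3 := pow_le_pow_right₀ hq (by norm_num)
      rw [mul_pow] at this; linarith
    have h4 : Real.exp (-(s ^ 2 / 2)) ≤ 1 := Real.exp_le_one_iff.2 (by linarith)
    calc a ^ 3 * (t⁻¹ * S * Real.exp (-s ^ 2))
        ≤ 8 * (1 + s ^ 2) ^ 3 * (t⁻¹ * 1 * Real.exp (-s ^ 2)) := by gcongr
      _ = 8 * t⁻¹ * ((1 + s ^ 2) ^ 3 * Real.exp (-s ^ 2)) := by ring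
      _ ≤ 8 * t⁻¹ * (216 * 1) := by
        gcongr 8 * t⁻¹ * ?_; linarith
      _ ≤ _ := by
        have := Real.exp_pos (-(s ^ 2 / 2))
        linarith
  · have ht1 : 1 ≤ t := not_lt.1 h
    have h1 : a ≤ 2 * t * r := by
      refine (pow_le_pow_iff_left₀ ha (by positivity) two_ne_zero).1 ?_
      rw [mul_pow, hr]
      refine hP.trans ?_
      gcongr
      nlinarith
    have h2 : a ^ 3 ≤ 8 * t ^ 3 * (1 + s ^ 2) ^ 2 := by
      have := pow_le_pow_left₀ ha h1 3
      refine this.trans ?_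
      rw [mul_pow, mul_pow]
      norm_num
      gcongr
    calc a ^ 3 * (t⁻¹ * S * Real.exp (-s ^ 2))
        ≤ 8 * t ^ 3 * (1 + s ^ 2) ^ 2 * (t⁻¹ * S * Real.exp (-s ^ 2)) := by gcongr
      _ = 8 * (1 + s ^ 2) ^ 2 * (S * t ^ 2) * Real.exp (-s ^ 2) := by field_simp
      _ ≤ 8 * (1 + s ^ 2) ^ 2 * (1 + s ^ 2) * Real.exp (-s ^ 2) := by gcongr; linarith
      _ = 8 * ((1 + s ^ 2) ^ 3 * Real.exp (-s ^ 2)) := by ring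
      _ ≤ _ := by linarith

section Kernel

variable {d : ℕ}

/-- The integrand `|w|⁻¹ sin²(v, w) μ(v - w)`. -/
noncomputable def integrand (v w : EuclideanSpace ℝ (Fin d)) : ℝ :=
  ‖w‖⁻¹ * (1 - (⟪v, w⟫_ℝ / (‖v‖ * ‖w‖)) ^ 2) * maxw d (v - w)

/-- The integrable majorant, up to constants, of `⟨v⟩³` times the integrand. -/
noncomputable def majorant (v w : EuclideanSpace ℝ (Fin d)) : ℝ :=
  Real.exp (-(‖w - v‖ ^ 2 / 2)) + (Metric.ball 0 1).indicator (fun x => ‖x‖⁻¹) w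

lemma jap_pos (v : EuclideanSpace ℝ (Fin d)) : 0 < jap v :=
  Real.sqrt_pos.2 (by positivity)

lemma jap_sq (v : EuclideanSpace ℝ (Fin d)) : jap v ^ 2 = 1 + ‖v‖ ^ 2 :=
  Real.sq_sqrt (by positivity)

lemma integrand_nonneg (v w : EuclideanSpace ℝ (Fin d)) : 0 ≤ integrand v w := by
  have := sinSq_nonneg v w
  unfold integrand maxw
  positivity

lemma measurable_integrand (v : EuclideanSpace ℝ (Fin d)) : Measurable (integrand v) := by
  unfold integrand maxw
  fun_prop

lemma integrand_le {v : EuclideanSpace ℝ (Fin d)} (hv : v ≠ 0) (w : EuclideanSpace ℝ (Fin d)) :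
    integrand v w ≤
      Real.pi ^ (-(d : ℝ) / 2) * 1728 * (jap v ^ 3)⁻¹ * majorant v w := by
  have ha := jap_pos v
  rcases eq_or_ne w 0 with rfl | hw
  · have : 0 ≤ majorant v 0 := by simp [majorant]; positivity
    simp only [integrand, norm_zero, inv_zero, zero_mul]
    positivity
  have hP : jap v ^ 2 ≤ 2 * (1 + ‖w‖ ^ 2) * (1 + ‖v - w‖ ^ 2) := by
    have h1 : ‖v‖ ≤ ‖v - w‖ + ‖w‖ := norm_le_norm_sub_add v w
    have h2 : ‖v‖ ^ 2 ≤ (‖v - w‖ + ‖w‖) ^ 2 := pow_le_pow_left₀ (norm_nonneg _) h1 2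
    rw [jap_sq]
    nlinarith [sq_nonneg (‖v - w‖ - ‖w‖), mul_nonneg (sq_nonneg ‖v - w‖) (sq_nonneg ‖w‖)]
  have h := scalar_bound ha.le (norm_pos_iff.2 hw) (sinSq_nonneg v w) (sinSq_le_one v w)
    (sinSq_mul_le hv hw) hP
  have hm : majorant v w =
      Real.exp (-(‖v - w‖ ^ 2 / 2)) + if ‖w‖ < 1 then ‖w‖⁻¹ else 0 := by
    by_cases h1 : ‖w‖ < 1
    · rw [majorant, Set.indicator_of_mem (mem_ball_zero_iff.2 h1), if_pos h1, norm_sub_rev]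
    · rw [majorant, Set.indicator_of_notMem (mt mem_ball_zero_iff.1 h1), if_neg h1, norm_sub_rev]
  rw [← hm] at h
  have hpi : 0 ≤ Real.pi ^ (-(d : ℝ) / 2) := by positivity
  calc integrand v w
      = Real.pi ^ (-(d : ℝ) / 2) * (jap v ^ 3)⁻¹ * (jap v ^ 3 *
          (‖w‖⁻¹ * (1 - (⟪v, w⟫_ℝ / (‖v‖ * ‖w‖)) ^ 2) * Real.exp (-‖v - w‖ ^ 2))) := by
        have hj : (jap v ^ 3)⁻¹ * jap v ^ 3 = 1 := inv_mul_cancel₀ (by positivity)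
        unfold integrand maxw
        linear_combination (-(Real.pi ^ (-(d : ℝ) / 2) *
          (‖w‖⁻¹ * (1 - (⟪v, w⟫_ℝ / (‖v‖ * ‖w‖)) ^ 2) * Real.exp (-‖v - w‖ ^ 2)))) * hj
    _ ≤ Real.pi ^ (-(d : ℝ) / 2) * (jap v ^ 3)⁻¹ * (1728 * majorant v w) := by gcongr
    _ = _ := by ring

lemma integrable_gauss :
    Integrable (fun x : EuclideanSpace ℝ (Fin d) => Real.exp (-(‖x‖ ^ 2 / 2))) := by
  have h := (GaussianFourier.integrable_cexp_neg_mul_sq_norm_add (V := EuclideanSpace ℝ (Fin d))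
    (b := 1 / 2) (by norm_num) 0 0).norm
  refine h.congr (.of_forall fun x => ?_)
  have : -(1 / 2 : ℂ) * (‖x‖ : ℂ) ^ 2 + 0 * ((⟪(0 : EuclideanSpace ℝ (Fin d)), x⟫_ℝ : ℝ) : ℂ)
      = ((-(‖x‖ ^ 2 / 2) : ℝ) : ℂ) := by
    push_cast; ring
  simp only [this, Complex.norm_exp, Complex.ofReal_re]

/-- `|w|⁻¹` is integrable near the origin, because `d ≥ 2`. -/
lemma integrable_singular (hd : 2 ≤ d) :
    Integrable ((Metric.ball 0 1).indicator (fun x : EuclideanSpace ℝ (Fin d) => ‖x‖⁻¹)) := by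
  rw [integrable_indicator_iff measurableSet_ball]
  refine integrableOn_ball_of_norm_le_rpow (C := 1) (α := 1) ?_ ?_ ?_ ?_
  · rw [finrank_euclideanSpace_fin]; omega
  · rw [finrank_euclideanSpace_fin]; exact_mod_cast hd
  · refine .of_forall fun x => ?_
    simp [Real.rpow_neg_one]
  · exact (measurable_norm.inv).aestronglyMeasurable

lemma integrable_majorant (hd : 2 ≤ d) (v : EuclideanSpace ℝ (Fin d)) :
    Integrable (majorant v) :=
  (integrable_gauss.comp_sub_right v).add (integrable_singular hd)

lemma integral_majorant (hd : 2 ≤ d) (v : EuclideanSpace ℝ (Fin d)) :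
    ∫ w, majorant v w = ∫ w, majorant (0 : EuclideanSpace ℝ (Fin d)) w := by
  unfold majorant
  rw [integral_add (integrable_gauss.comp_sub_right v) (integrable_singular hd),
    integral_add (integrable_gauss.comp_sub_right 0) (integrable_singular hd),
    integral_sub_right_eq_self (fun x : EuclideanSpace ℝ (Fin d) => Real.exp (-(‖x‖ ^ 2 / 2))) v,
    integral_sub_right_eq_self (fun x : EuclideanSpace ℝ (Fin d) => Real.exp (-(‖x‖ ^ 2 / 2))) 0]

lemma integrable_integrand (hd : 2 ≤ d) {v : EuclideanSpace ℝ (Fin d)} (hv : v ≠ 0) :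
    Integrable (integrand v) := by
  refine ((integrable_majorant hd v).const_mul
    (Real.pi ^ (-(d : ℝ) / 2) * 1728 * (jap v ^ 3)⁻¹)).mono'
    (measurable_integrand v).aestronglyMeasurable (.of_forall fun w => ?_)
  rw [Real.norm_of_nonneg (integrand_nonneg v w)]
  exact integrand_le hv w

lemma le_integrand {v e w : EuclideanSpace ℝ (Fin d)} (hv : v ≠ 0) (he : ‖e‖ = 1)
    (hve : ⟪v, e⟫_ℝ = 0) (hw : w ∈ Metric.ball (v + e) (1 / 2)) :
    Real.pi ^ (-(d : ℝ) / 2) * Real.exp (-(9 / 4)) * (2 / 125) * (jap v ^ 3)⁻¹ ≤ integrand v w := by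
  have ha := jap_pos v
  have ha2 := jap_sq v
  have hn : ‖w - (v + e)‖ < 1 / 2 := by simpa [dist_eq_norm] using hw
  have hew : 1 / 2 ≤ ⟪e, w⟫_ℝ := by
    have h1 : ⟪e, w⟫_ℝ = 1 + ⟪e, w - (v + e)⟫_ℝ := by
      rw [inner_sub_right, inner_add_right, real_inner_self_eq_norm_sq, he, real_inner_comm v e,
        hve]
      ring
    have h2 := abs_real_inner_le_norm e (w - (v + e))
    rw [he, one_mul] at h2
    have := (abs_le.1 h2).1
    linarith
  have hw0 : w ≠ 0 := by
    rintro rfl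
    rw [inner_zero_right] at hew
    norm_num at hew
  have hwp : 0 < ‖w‖ := norm_pos_iff.2 hw0
  have hu : ‖v - w‖ ≤ 3 / 2 := by
    have h : v - w = -(w - (v + e)) - e := by abel
    rw [h]
    refine (norm_sub_le _ _).trans ?_
    rw [norm_neg, he]; linarith
  have hwa : ‖w‖ ≤ 5 / 2 * jap v := by
    have h1 : ‖w‖ ≤ ‖v‖ + ‖v - w‖ := by
      have := norm_le_norm_add_norm_sub' w v
      rwa [norm_sub_rev] at this
    have h2 : ‖v‖ ≤ jap v := by nlinarith [norm_nonneg v]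
    have h3 : 1 ≤ jap v := by nlinarith [norm_nonneg v]
    linarith
  have hS : 1 / 4 * (‖w‖ ^ 2)⁻¹ ≤ 1 - (⟪v, w⟫_ℝ / (‖v‖ * ‖w‖)) ^ 2 := by
    rw [← div_eq_mul_inv, div_le_iff₀ (by positivity)]
    refine le_trans ?_ (le_sinSq_mul hv hw0 he hve)
    nlinarith
  have hexp : Real.exp (-(9 / 4)) ≤ Real.exp (-‖v - w‖ ^ 2) := by
    apply Real.exp_le_exp.2
    nlinarith [norm_nonneg (v - w)]
  have hinv : (8 / 125 : ℝ) * (jap v ^ 3)⁻¹ ≤ (‖w‖ ^ 3)⁻¹ := by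
    have : (8 / 125 : ℝ) * (jap v ^ 3)⁻¹ = ((5 / 2 * jap v) ^ 3)⁻¹ := by
      rw [mul_pow, mul_inv]; norm_num
    rw [this]
    gcongr
  calc Real.pi ^ (-(d : ℝ) / 2) * Real.exp (-(9 / 4)) * (2 / 125) * (jap v ^ 3)⁻¹
      = 1 / 4 * ((8 / 125) * (jap v ^ 3)⁻¹) *
          (Real.pi ^ (-(d : ℝ) / 2) * Real.exp (-(9 / 4))) := by ring
    _ ≤ 1 / 4 * (‖w‖ ^ 3)⁻¹ * (Real.pi ^ (-(d : ℝ) / 2) * Real.exp (-‖v - w‖ ^ 2)) := by gcongr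
    _ = ‖w‖⁻¹ * (1 / 4 * (‖w‖ ^ 2)⁻¹) *
          (Real.pi ^ (-(d : ℝ) / 2) * Real.exp (-‖v - w‖ ^ 2)) := by
        field_simp
    _ ≤ _ := by
        unfold integrand maxw
        gcongr

end Kernel

/-- **Asymptotics of the eigenvalue of the Landau diffusion matrix in the direction `v`:**
for `d ≥ 2` there is `C ≥ 1`, depending only on `d`, such that for all `v ≠ 0`,
`∫ |v_*|⁻¹ (1 - (v·v_*/(|v||v_*|))²) μ(v - v_*) dv_* ≃ ⟨v⟩⁻³`. -/
theorem lambda_one_asymptotics (d : ℕ) (hd : 2 ≤ d) :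
    ∃ C : ℝ, 1 ≤ C ∧ ∀ v : EuclideanSpace ℝ (Fin d), v ≠ 0 →
      (1 / C) * ((jap v) ^ 3)⁻¹
          ≤ (∫ w : EuclideanSpace ℝ (Fin d),
              ‖w‖⁻¹ * (1 - (⟪v, w⟫_ℝ / (‖v‖ * ‖w‖)) ^ 2) * maxw d (v - w)) ∧
        (∫ w : EuclideanSpace ℝ (Fin d),
              ‖w‖⁻¹ * (1 - (⟪v, w⟫_ℝ / (‖v‖ * ‖w‖)) ^ 2) * maxw d (v - w))
          ≤ C * ((jap v) ^ 3)⁻¹ := by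
  set K : ℝ := Real.pi ^ (-(d : ℝ) / 2) * 1728 *
    ∫ w, majorant (0 : EuclideanSpace ℝ (Fin d)) w with hK
  set B : ℝ := volume.real (Metric.ball (0 : EuclideanSpace ℝ (Fin d)) (1 / 2)) with hB
  set c : ℝ := B * (Real.pi ^ (-(d : ℝ) / 2) * Real.exp (-(9 / 4)) * (2 / 125)) with hc
  have hBpos : 0 < B :=
    ENNReal.toReal_pos (Metric.measure_ball_pos _ _ (by norm_num)).ne' measure_ball_lt_top.ne
  have hcpos : 0 < c := by positivity
  refine ⟨max 1 (max K c⁻¹), le_max_left _ _, fun v hv => ?_⟩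
  change _ ≤ ∫ w, integrand v w ∧ ∫ w, integrand v w ≤ _
  have hj : 0 < (jap v ^ 3)⁻¹ := by have := jap_pos v; positivity
  constructor
  · obtain ⟨e, he, hve⟩ := exists_unit_orthogonal hd hv
    have hCc : 1 / max 1 (max K c⁻¹) ≤ c := by
      rw [one_div]
      exact inv_le_of_inv_le₀ hcpos ((le_max_right _ _).trans (le_max_right _ _))
    calc 1 / max 1 (max K c⁻¹) * (jap v ^ 3)⁻¹ ≤ c * (jap v ^ 3)⁻¹ := by gcongr
      _ = ∫ _ in Metric.ball (v + e) (1 / 2), Real.pi ^ (-(d : ℝ) / 2) * Real.exp (-(9 / 4)) *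
            (2 / 125) * (jap v ^ 3)⁻¹ := by
          rw [setIntegral_const, Measure.addHaar_real_ball_center, smul_eq_mul, hc]
          ring
      _ ≤ ∫ w in Metric.ball (v + e) (1 / 2), integrand v w :=
          setIntegral_mono_on (integrableOn_const measure_ball_lt_top.ne)
            (integrable_integrand hd hv).integrableOn measurableSet_ball
            fun w hw => le_integrand hv he hve hw
      _ ≤ ∫ w, integrand v w :=
          setIntegral_le_integral (integrable_integrand hd hv)
            (.of_forall fun w => integrand_nonneg v w)
  · calc ∫ w, integrand v w
        ≤ ∫ w, Real.pi ^ (-(d : ℝ) / 2) * 1728 * (jap v ^ 3)⁻¹ * majorant v w :=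
          integral_mono (integrable_integrand hd hv) ((integrable_majorant hd v).const_mul _)
            fun w => integrand_le hv w
      _ = K * (jap v ^ 3)⁻¹ := by
          rw [integral_const_mul, integral_majorant hd v, hK]
          ring
      _ ≤ max 1 (max K c⁻¹) * (jap v ^ 3)⁻¹ := by
          gcongr
          exact (le_max_left _ _).trans (le_max_right _ _)
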